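/- Let G be an infinite locally soluble group with G ≠ G' (G is not equal to its derived subgroup) and let A be a ℤG-module with C_G(A) = 1, where ℤ is the ring of integers. If A/C_A(G) is not a minimax ℤ-module and A/C_A(H) is a minimax ℤ-module for every proper subgroup H of G, then G is isomorphic to a quasi-cyclic q-group C_{q^∞} for some prime q. -/

import Mathlib

/-- `C_A(H)`: the `R`-submodule of `A` consisting of the elements fixed by every
element of the subgroup `H` of `G`. -/
def moduleCentralizer (R : Type*) [Ring R] {G : Type*} [Group G] (A : Type*)
    [AddCommGroup A] [Module R A] [DistribMulAction G A] [SMulCommClass G R A]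
    (H : Subgroup G) : Submodule R A where
  carrier := {a | ∀ g ∈ H, g • a = a}
  add_mem' := fun {a b} ha hb g hg => by rw [smul_add, ha g hg, hb g hg]
  zero_mem' := fun g _ => smul_zero g
  smul_mem' := fun r a ha g hg => by rw [smul_comm, ha g hg]

/-- An `R`-module is minimax if it has a finite series of submodules each of whose
factors is either a Noetherian `R`-module or an Artinian `R`-module. -/
def Module.IsMinimax (R M : Type*) [Ring R] [AddCommGroup M] [Module R M] : Prop :=
  ∃ (n : ℕ) (f : Fin (n + 1) → Submodule R M),
    Monotone f ∧ f 0 = ⊥ ∧ f (Fin.last n) = ⊤ ∧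
    ∀ i : Fin n,
      IsNoetherian R (↥(f i.succ) ⧸ Submodule.comap (f i.succ).subtype (f i.castSucc)) ∨
      IsArtinian R (↥(f i.succ) ⧸ Submodule.comap (f i.succ).subtype (f i.castSucc))

/-- The quasi-cyclic (Prüfer) `q`-group `C_{q^∞}`: the `q`-primary component of `ℚ/ℤ`. -/
def PruferGroup (q : ℕ) (hq : q.Prime) :
    AddSubgroup (ℚ ⧸ AddSubgroup.zmultiples (1 : ℚ)) :=
  haveI : Fact q.Prime := ⟨hq⟩
  AddCommGroup.primaryComponent (ℚ ⧸ AddSubgroup.zmultiples (1 : ℚ)) q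

/-!
Since `C_A(⟨H, K⟩) = C_A(H) ∩ C_A(K)`, the group `G` is not the join of two proper subgroups, so it
is not finitely generated and has no proper subgroup of finite index. The same then holds for
`G/G'`, which is therefore divisible and, by injectivity of divisible groups, quasi-cyclic.

A group without proper subgroups of finite index acts trivially on finite modules. If it acts on a
minimax `ℤ`-module `M`, it thus fixes each finite `n`-torsion subgroup of `M` and acts trivially on
each finite quotient `M/nM`, so `(g - 1)M` lies in the intersection of the `p ^ k M`. For almost all
primes `p` this intersection is torsion, and `(h - 1)(g - 1)M = 0` follows. Taking `M = A/C_A(H)`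
for the proper normal subgroups `H = G'` and `H = ⟨g⟩G'`, one finds for `k ∈ G'` that `k` fixes
`(h - 1)(g - 1)A` and that every `g` fixes `(k - 1)A`. Faithfulness turns these identities into
`⁅⁅k, g⁆, h⁆ = 1`, so `G` is nilpotent.

Finally, in a group of class two `⁅g, x ^ n⁆ = ⁅g ^ n, x⁆`, so a torsion divisible `G/G'` forces
`G' = ⁅G', G⁆`; for nilpotent `G` this gives `G' = 1` and `G ≃ G/G'`.
-/

section SupIrred

@[to_additive]
theorem subgroup_supIrred_top_of_surjective {G N : Type*} [Group G] [Group N] [Nontrivial N]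
    (hG : SupIrred (⊤ : Subgroup G)) {f : G →* N} (hf : Function.Surjective f) :
    SupIrred (⊤ : Subgroup N) := by
  refine ⟨fun h => top_ne_bot (isMin_iff_eq_bot.1 h), fun H K hHK => ?_⟩
  have hcomap : H.comap f ⊔ K.comap f = ⊤ := by
    rw [Subgroup.comap_sup_eq f H K hf, hHK, Subgroup.comap_top]
  refine (hG.2 hcomap).imp (fun h => ?_) fun h => ?_ <;>
    exact Subgroup.comap_injective hf (h.trans (Subgroup.comap_top f).symm)

theorem supIrred_apply_orderIso {α β : Type*} [SemilatticeSup α] [SemilatticeSup β] (e : α ≃o β)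
    {a : α} (ha : SupIrred a) : SupIrred (e a) := by
  refine ⟨mt e.isMin_apply.1 ha.1, fun b c hbc => ?_⟩
  have hsymm : e.symm b ⊔ e.symm c = a := by rw [← e.symm.map_sup, hbc, e.symm_apply_apply]
  exact (ha.2 hsymm).imp e.symm_apply_eq.1 e.symm_apply_eq.1

theorem addSubgroup_supIrred_top_additive {G : Type*} [Group G] (hG : SupIrred (⊤ : Subgroup G)) :
    SupIrred (⊤ : AddSubgroup (Additive G)) :=
  supIrred_apply_orderIso Subgroup.toAddSubgroup hG

end SupIrred

section SupIrredGroup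

variable {G : Type*} [Group G]

@[to_additive]
theorem exists_zpowers_eq_top_of_closure_eq_top (hG : SupIrred (⊤ : Subgroup G)) {S : Set G}
    (hS : S.Finite) (hcl : Subgroup.closure S = ⊤) : ∃ s ∈ S, Subgroup.zpowers s = ⊤ := by
  lift S to Finset G using hS
  refine hG.finset_sup_eq (eq_top_iff.2 (hcl ▸ (Subgroup.closure_le _).2 fun s hs => ?_))
  exact Finset.le_sup (f := Subgroup.zpowers) hs (Subgroup.mem_zpowers s)

@[to_additive]
theorem zpowers_ne_top_of_supIrred_top [Infinite G] (hG : SupIrred (⊤ : Subgroup G)) (g : G) :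
    Subgroup.zpowers g ≠ ⊤ := by
  intro hg
  have hord : orderOf g = 0 :=
    Infinite.orderOf_eq_zero_of_forall_mem_zpowers fun x => hg.ge (Subgroup.mem_top x)
  have hpow {n : ℕ} (hn : n ≠ 1) : Subgroup.zpowers (g ^ n) ≠ ⊤ := fun h => by
    have hmem := mem_zpowers_pow_iff.1 (h.ge (Subgroup.mem_top g))
    exact hn (by simpa [hord] using hmem)
  have hsup : Subgroup.zpowers (g ^ 2) ⊔ Subgroup.zpowers (g ^ 3) = ⊤ := by
    rw [← top_le_iff, ← hg, Subgroup.zpowers_le]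
    have hmem := Subgroup.mul_mem_sup (inv_mem (Subgroup.mem_zpowers (g ^ 2)))
      (Subgroup.mem_zpowers (g ^ 3))
    rwa [show (g ^ 2)⁻¹ * g ^ 3 = g by group] at hmem
  exact (hG.2 hsup).elim (hpow (by decide)) (hpow (by decide))

@[to_additive]
theorem exists_finite_subgroup_sup_closure_eq_top (H : Subgroup G) [H.FiniteIndex] :
    ∃ S : Set G, S.Finite ∧ H ⊔ Subgroup.closure S = ⊤ := by
  refine ⟨Set.range fun x : G ⧸ H => x.out, Set.finite_range _, eq_top_iff.2 fun g _ => ?_⟩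
  obtain ⟨h, hh⟩ := QuotientGroup.mk_out_eq_mul H g
  rw [eq_mul_inv_of_mul_eq hh.symm]
  exact mul_mem (Subgroup.mem_sup_right (Subgroup.subset_closure ⟨_, rfl⟩))
    (Subgroup.mem_sup_left (inv_mem h.2))

@[to_additive]
theorem subgroup_eq_top_of_finiteIndex [Infinite G] (hG : SupIrred (⊤ : Subgroup G))
    (H : Subgroup G) [H.FiniteIndex] : H = ⊤ := by
  obtain ⟨S, hS, hsup⟩ := exists_finite_subgroup_sup_closure_eq_top H
  refine (hG.2 hsup).resolve_right fun hcl => ?_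
  obtain ⟨g, -, hg⟩ := exists_zpowers_eq_top_of_closure_eq_top hG hS hcl
  exact zpowers_ne_top_of_supIrred_top hG g hg

end SupIrredGroup

section Divisible

variable {B : Type*} [AddCommGroup B]

noncomputable abbrev divisibleByIntOfPrime
    (h : ∀ p : ℕ, p.Prime → Function.Surjective fun x : B => p • x) : DivisibleBy B ℤ :=
  haveI hnat {n : ℕ} : n ≠ 0 → Function.Surjective fun x : B => n • x := by
    induction n using Nat.recOnMul with
    | zero => exact fun hn => absurd rfl hn
    | one => exact fun _ x => ⟨x, one_smul ℕ x⟩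
    | prime p hp => exact fun _ => h p hp
    | mul m n hm hn =>
      intro hmn x
      obtain ⟨y, rfl⟩ := hm (left_ne_zero_of_mul hmn) x
      obtain ⟨z, rfl⟩ := hn (right_ne_zero_of_mul hmn) y
      exact ⟨z, mul_smul m n z⟩
  letI := divisibleByOfSMulRightSurj B ℕ hnat
  AddGroup.divisibleByIntOfDivisibleByNat B

theorem exists_finiteIndex_notMem (K : Type*) [Field K] [Finite K] {V : Type*} [AddCommGroup V]
    [Module K V] {v : V} (hv : v ≠ 0) : ∃ H : AddSubgroup V, H.FiniteIndex ∧ v ∉ H := by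
  obtain ⟨φ, hφ⟩ := Module.Projective.exists_dual_ne_zero K hv
  have : Finite (V ⧸ φ.toAddMonoidHom.ker) :=
    Finite.of_injective _ (QuotientAddGroup.kerLift_injective φ.toAddMonoidHom)
  exact ⟨φ.toAddMonoidHom.ker, AddSubgroup.finiteIndex_of_finite_quotient, hφ⟩

theorem surjective_nsmul_of_forall_finiteIndex_eq_top
    (hB : ∀ H : AddSubgroup B, H.FiniteIndex → H = ⊤) {p : ℕ} (hp : p.Prime) :
    Function.Surjective fun x : B => p • x := by
  have : Fact p.Prime := ⟨hp⟩
  let N : AddSubgroup B := (nsmulAddMonoidHom p : B →+ B).range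
  let : Module (ZMod p) (B ⧸ N) := QuotientAddGroup.zmodModule fun x => ⟨x, rfl⟩
  intro x
  by_contra hx
  obtain ⟨H, hH, hxH⟩ :=
    exists_finiteIndex_notMem (ZMod p) (mt (QuotientAddGroup.eq_zero_iff (N := N) x).1 hx)
  have htop := hB (H.comap (QuotientAddGroup.mk' N)) ⟨by
    rw [AddSubgroup.index_comap_of_surjective H (QuotientAddGroup.mk'_surjective N)]
    exact hH.index_ne_zero⟩
  exact hxH (htop.ge (AddSubgroup.mem_top x))

theorem eq_top_of_divisibleBy (hB : SupIrred (⊤ : AddSubgroup B)) (D : AddSubgroup B)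
    [DivisibleBy D ℤ] (hD : D ≠ ⊥) : D = ⊤ := by
  obtain ⟨r, hr⟩ := (Module.Baer.of_divisible D).extension_property_addMonoidHom D.subtype
    D.subtype_injective (AddMonoidHom.id D)
  have hr' (d : D) : r d = d := DFunLike.congr_fun hr d
  have hsup : D ⊔ r.ker = ⊤ := by
    refine eq_top_iff.2 fun x _ => ?_
    have hx : x - r x ∈ r.ker := by rw [AddMonoidHom.mem_ker, map_sub, hr', sub_self]
    simpa using AddSubgroup.add_mem_sup (r x).2 hx
  refine (hB.2 hsup).resolve_right fun hker => hD (D.eq_bot_iff_forall.2 fun x hx => ?_)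
  have hx0 : r x = 0 := AddMonoidHom.mem_ker.1 (hker.ge (AddSubgroup.mem_top x))
  simpa [hx0] using (congrArg Subtype.val (hr' ⟨x, hx⟩)).symm

variable [DivisibleBy B ℤ]

noncomputable instance divisibleByPrimaryComponent (p : ℕ) [hp : Fact p.Prime] :
    DivisibleBy (AddCommGroup.primaryComponent B p) ℤ :=
  divisibleByIntOfPrime fun q hq ⟨x, k, hk⟩ => by
    obtain rfl | hqp := eq_or_ne q p
    · obtain ⟨y, rfl⟩ := DivisibleBy.surjective_smul B ℤ (Int.natCast_ne_zero.2 hq.ne_zero) x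
      refine ⟨⟨y, k + 1, ?_⟩, Subtype.ext (natCast_zsmul y q).symm⟩
      rwa [pow_succ, mul_smul, ← natCast_zsmul y]
    · have hcop : IsCoprime ((p ^ k : ℕ) : ℤ) q :=
        Nat.isCoprime_iff_coprime.2
          (Nat.Coprime.pow_left k ((Nat.coprime_primes hp.out hq).2 hqp.symm))
      obtain ⟨u, v, huv⟩ := hcop
      refine ⟨v • ⟨x, k, hk⟩, Subtype.ext ?_⟩
      calc q • v • x = u • p ^ k • x + q • v • x := by rw [hk, smul_zero, zero_add]
        _ = (u * (p ^ k : ℕ) + v * q) • x := by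
          rw [add_smul, mul_smul, mul_comm v, mul_smul, natCast_zsmul, natCast_zsmul]
        _ = x := by rw [huv, one_smul]

theorem primaryComponent_eq_top {p : ℕ} [hp : Fact p.Prime] (hB : SupIrred (⊤ : AddSubgroup B))
    {x : B} (hx : addOrderOf x = p) : AddCommGroup.primaryComponent B p = ⊤ := by
  refine eq_top_of_divisibleBy hB _ fun hbot => ?_
  have hmem : x ∈ AddCommGroup.primaryComponent B p :=
    ⟨1, by rw [pow_one, ← hx, addOrderOf_nsmul_eq_zero]⟩
  rw [hbot, AddSubgroup.mem_bot] at hmem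
  exact hp.out.one_lt.ne' (hx ▸ AddMonoid.addOrderOf_eq_one_iff.2 hmem)

theorem eq_of_addOrderOf_eq_prime (hB : SupIrred (⊤ : AddSubgroup B)) {p q : ℕ} (hp : p.Prime)
    (hq : q.Prime) {x y : B} (hx : addOrderOf x = p) (hy : addOrderOf y = q) : p = q := by
  have : Fact p.Prime := ⟨hp⟩
  obtain ⟨k, hk⟩ : y ∈ AddCommGroup.primaryComponent B p :=
    (primaryComponent_eq_top hB hx).ge (AddSubgroup.mem_top y)
  exact ((Nat.prime_dvd_prime_iff_eq hq hp).1
    (hq.dvd_of_dvd_pow (hy ▸ addOrderOf_dvd_of_nsmul_eq_zero hk))).symm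

theorem exists_addOrderOf_quotient_zmultiples_eq_prime {x : B} (hx : ¬IsOfFinAddOrder x)
    {p : ℕ} (hp : p.Prime) : ∃ y : B ⧸ AddSubgroup.zmultiples x, addOrderOf y = p := by
  have : Fact p.Prime := ⟨hp⟩
  obtain ⟨y, hy⟩ := DivisibleBy.surjective_smul B ℤ (Int.natCast_ne_zero.2 hp.ne_zero) x
  refine ⟨y, addOrderOf_eq_prime ?_ fun h0 => ?_⟩
  · rw [← QuotientAddGroup.mk_nsmul, QuotientAddGroup.eq_zero_iff, ← natCast_zsmul]
    exact hy ▸ AddSubgroup.mem_zmultiples x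
  · obtain ⟨k, rfl⟩ := (QuotientAddGroup.eq_zero_iff y).1 h0
    have hkp : (p * k : ℤ) • x = (1 : ℤ) • x := by simpa [mul_smul] using hy
    exact hp.one_lt.ne' (Nat.dvd_one.1 (Int.natCast_dvd_natCast.1
      ⟨k, by simpa using (injective_zsmul_iff_not_isOfFinAddOrder.2 hx hkp).symm⟩))

theorem exists_isOfFinAddOrder_ne_zero (hB : SupIrred (⊤ : AddSubgroup B)) :
    ∃ x : B, x ≠ 0 ∧ IsOfFinAddOrder x := by
  by_contra! htf
  obtain ⟨x, -, hx⟩ := ((⊤ : AddSubgroup B).bot_or_exists_ne_zero).resolve_left hB.ne_bot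
  let π := QuotientAddGroup.mk' (AddSubgroup.zmultiples x)
  have hπ : Function.Surjective π := QuotientAddGroup.mk'_surjective _
  let : DivisibleBy (B ⧸ AddSubgroup.zmultiples x) ℤ :=
    hπ.divisibleBy π fun y n => map_zsmul π n y
  have hprime {p : ℕ} (hp : p.Prime) :=
    exists_addOrderOf_quotient_zmultiples_eq_prime (htf x hx) hp
  obtain ⟨y, hy⟩ := hprime Nat.prime_two
  obtain ⟨z, hz⟩ := hprime Nat.prime_three
  have : Nontrivial (B ⧸ AddSubgroup.zmultiples x) :=
    ⟨y, 0, fun hy0 => by simp [hy0] at hy⟩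
  have h23 := eq_of_addOrderOf_eq_prime (addSubgroup_supIrred_top_of_surjective hB hπ)
    Nat.prime_two Nat.prime_three hy hz
  norm_num at h23

theorem exists_addOrderOf_eq_prime (hB : SupIrred (⊤ : AddSubgroup B)) :
    ∃ p : ℕ, p.Prime ∧ ∃ x : B, addOrderOf x = p := by
  obtain ⟨x, hx0, hx⟩ := exists_isOfFinAddOrder_ne_zero hB
  have hord : addOrderOf x ≠ 1 := mt AddMonoid.addOrderOf_eq_one_iff.1 hx0
  exact ⟨_, Nat.minFac_prime hord, _,
    addOrderOf_nsmul_addOrderOf_sub hx.addOrderOf_pos.ne' (Nat.minFac_dvd _)⟩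

end Divisible

section Prufer

variable {B : Type*} [AddCommGroup B] {p : ℕ} [hp : Fact p.Prime]

theorem exists_addCircle_hom_apply_inv_eq [DivisibleBy B ℤ] {n : ℕ} [NeZero n] {x : B}
    (hx : n • x = 0) :
    ∃ f : AddCircle (1 : ℚ) →+ B, f ((n : ℚ)⁻¹ : ℚ) = x := by
  have hn : (n : ℚ)⁻¹ ≠ 0 := inv_ne_zero (NeZero.ne (n : ℚ))
  obtain ⟨g, hg⟩ := (Module.Baer.of_divisible B).extension_property_addMonoidHom
    (zmultiplesHom ℚ (n : ℚ)⁻¹) (smul_left_injective ℤ hn) (zmultiplesHom B x)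
  have hginv : g (n : ℚ)⁻¹ = x := by simpa using DFunLike.congr_fun hg 1
  have hg1 : g 1 = 0 := by
    rw [← mul_inv_cancel₀ (NeZero.ne (n : ℚ)), ← nsmul_eq_mul, map_nsmul, hginv, hx]
  exact ⟨QuotientAddGroup.lift _ g (AddSubgroup.zmultiples_le.2 hg1), hginv⟩

theorem exists_nsmul_eq_inv_of_prime_dvd_addOrderOf {x : AddCircle (1 : ℚ)}
    (hx : IsOfFinAddOrder x) (hpx : p ∣ addOrderOf x) :
    ∃ n : ℕ, n • x = (((p : ℚ)⁻¹ : ℚ) : AddCircle (1 : ℚ)) := by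
  have : Fact (0 < (1 : ℚ)) := ⟨one_pos⟩
  obtain ⟨m, -, hmp, hm⟩ := (AddCircle.addOrderOf_eq_pos_iff hp.out.pos).1
    (addOrderOf_nsmul_addOrderOf_sub hx.addOrderOf_pos.ne' hpx)
  have hinv : addOrderOf (((p : ℚ)⁻¹ : ℚ) : AddCircle (1 : ℚ)) = p := by
    simpa using AddCircle.addOrderOf_period_div (p := (1 : ℚ)) hp.out.pos
  obtain ⟨k, hk⟩ := exists_nsmul_eq_self_of_coprime (hinv.symm ▸ hmp)
  refine ⟨k * (addOrderOf x / p), ?_⟩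
  rw [mul_smul, ← hm, ← hk, ← AddCircle.coe_nsmul]
  simp [div_eq_mul_inv]

theorem injective_comp_subtype_primaryComponent {f : AddCircle (1 : ℚ) →+ B}
    (hf : f (((p : ℚ)⁻¹ : ℚ) : AddCircle (1 : ℚ)) ≠ 0) :
    Function.Injective
      (f.comp (AddCommGroup.primaryComponent (AddCircle (1 : ℚ)) p).subtype) := by
  refine (injective_iff_map_eq_zero _).2 ?_
  rintro ⟨y, hy⟩ (hfy : f y = 0)
  refine Subtype.ext ?_
  by_contra hy0
  obtain ⟨k, hk⟩ := exists_addOrderOf_eq_prime_pow_iff.2 hy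
  have hk0 : k ≠ 0 := by
    rintro rfl
    exact hy0 (AddMonoid.addOrderOf_eq_one_iff.1 (hk.trans (pow_zero p)))
  have hfin : IsOfFinAddOrder y := addOrderOf_pos_iff.1 (hk ▸ pow_pos hp.out.pos k)
  obtain ⟨n, hn⟩ :=
    exists_nsmul_eq_inv_of_prime_dvd_addOrderOf hfin (hk.symm ▸ dvd_pow_self p hk0)
  exact hf (by rw [← hn, map_nsmul, hfy, smul_zero])

theorem exists_addEquiv_pruferGroup [DivisibleBy B ℤ] (hB : SupIrred (⊤ : AddSubgroup B)) :
    ∃ (q : ℕ) (hq : q.Prime), Nonempty (B ≃+ PruferGroup q hq) := by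
  obtain ⟨p, hp, x, hx⟩ := exists_addOrderOf_eq_prime hB
  have : Fact p.Prime := ⟨hp⟩
  obtain ⟨g, hg⟩ := exists_addCircle_hom_apply_inv_eq (hx ▸ addOrderOf_nsmul_eq_zero x)
  let P := AddCommGroup.primaryComponent (AddCircle (1 : ℚ)) p
  let f : P →+ B := g.comp P.subtype
  have hx0 : x ≠ 0 := fun h => hp.ne_one (hx ▸ AddMonoid.addOrderOf_eq_one_iff.2 h)
  have hinj : Function.Injective f := injective_comp_subtype_primaryComponent (hg ▸ hx0)
  have hinv : (((p : ℚ)⁻¹ : ℚ) : AddCircle (1 : ℚ)) ∈ P := ⟨1, by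
    rw [pow_one, ← AddCircle.coe_nsmul, nsmul_eq_mul,
      mul_inv_cancel₀ (Nat.cast_ne_zero.2 hp.ne_zero), AddCircle.coe_period]⟩
  have hsurj : Function.Surjective f := by
    let : DivisibleBy f.range ℤ :=
      f.rangeRestrict_surjective.divisibleBy _ fun y n => map_zsmul f.rangeRestrict n y
    refine AddMonoidHom.range_eq_top.1 (eq_top_of_divisibleBy hB _ fun hbot => hx0 ?_)
    exact hg.symm.trans (DFunLike.congr_fun (AddMonoidHom.range_eq_bot_iff.1 hbot) ⟨_, hinv⟩)
  exact ⟨p, hp, ⟨(AddEquiv.ofBijective f ⟨hinj, hsurj⟩).symm⟩⟩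

end Prufer

section Nilpotent

open scoped commutatorElement

variable {G : Type*} [Group G]

/-- The map `⁅g, ·⁆`, which is a homomorphism when all commutators are central. -/
def commutatorHom (hcenter : commutator G ≤ Subgroup.center G) (g : G) : G →* G where
  toFun x := ⁅g, x⁆
  map_one' := commutatorElement_one_right g
  map_mul' x y := by
    have hy : ⁅g, y⁆ ∈ Subgroup.center G :=
      hcenter (Subgroup.commutator_mem_commutator (Subgroup.mem_top g) (Subgroup.mem_top y))
    rw [commutatorElement_mul_right_eq_mul_conj, mul_assoc ⁅g, x⁆, Subgroup.mem_center_iff.1 hy,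
      mul_assoc, mul_inv_cancel_right]

theorem commutatorElement_pow_left (hcenter : commutator G ≤ Subgroup.center G) (g h : G)
    (n : ℕ) : ⁅g ^ n, h⁆ = ⁅g, h ^ n⁆ := by
  calc ⁅g ^ n, h⁆ = (commutatorHom hcenter h (g ^ n))⁻¹ := (commutatorElement_inv h (g ^ n)).symm
    _ = (⁅h, g⁆ ^ n)⁻¹ := by rw [map_pow]; rfl
    _ = ⁅g, h⁆ ^ n := by rw [← inv_pow, commutatorElement_inv]
    _ = ⁅g, h ^ n⁆ := (map_pow (commutatorHom hcenter g) h n).symm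

theorem commutatorElement_eq_one_of_mem_center {g c : G} (hc : c ∈ Subgroup.center G) :
    ⁅g, c⁆ = 1 :=
  commutatorElement_eq_one_iff_mul_comm.2 (Subgroup.mem_center_iff.1 hc g)

theorem surjective_abelianization_of (G : Type*) [Group G] :
    Function.Surjective (Abelianization.of : G →* Abelianization G) :=
  QuotientGroup.mk_surjective

theorem commutator_eq_bot_of_le_center (hcenter : commutator G ≤ Subgroup.center G)
    (htors : IsMulTorsion (Abelianization G))
    (hdiv : ∀ n : ℕ, n ≠ 0 → Function.Surjective fun x : Abelianization G => x ^ n) :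
    commutator G = ⊥ := by
  have hcentral {x : G} (hx : Abelianization.of x = 1) : x ∈ Subgroup.center G :=
    hcenter (Abelianization.ker_of G ▸ hx)
  refine eq_bot_iff.2 (Subgroup.commutator_le.2 fun g _ h _ => Subgroup.mem_bot.2 ?_)
  obtain ⟨n, hn, hgn⟩ := isOfFinOrder_iff_pow_eq_one.1 (htors (Abelianization.of g))
  obtain ⟨y, hy⟩ := hdiv n hn.ne' (Abelianization.of h)
  obtain ⟨x, rfl⟩ := surjective_abelianization_of G y
  have hxh : (x ^ n)⁻¹ * h ∈ Subgroup.center G := hcentral <| by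
    rw [map_mul, map_inv, map_pow, inv_mul_eq_one]; exact hy
  have hgn' : g ^ n ∈ Subgroup.center G := hcentral (by rw [map_pow, hgn])
  calc ⁅g, h⁆ = commutatorHom hcenter g (x ^ n * ((x ^ n)⁻¹ * h)) := by
        rw [mul_inv_cancel_left]; rfl
    _ = ⁅g, x ^ n⁆ * ⁅g, (x ^ n)⁻¹ * h⁆ := map_mul _ _ _
    _ = ⁅g ^ n, x⁆ := by
      rw [commutatorElement_eq_one_of_mem_center hxh, mul_one, commutatorElement_pow_left hcenter]
    _ = 1 := by
      rw [← commutatorElement_inv, commutatorElement_eq_one_of_mem_center hgn', inv_one]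

theorem map_commutator_eq_of_surjective {N : Type*} [Group N] {f : G →* N}
    (hf : Function.Surjective f) : (commutator G).map f = commutator N := by
  rw [commutator_def, Subgroup.map_commutator, Subgroup.map_top_of_surjective f hf,
    ← commutator_def]

theorem commutator_commutator_top_eq
    (htors : IsMulTorsion (Abelianization G))
    (hdiv : ∀ n : ℕ, n ≠ 0 → Function.Surjective fun x : Abelianization G => x ^ n) :
    ⁅commutator G, (⊤ : Subgroup G)⁆ = commutator G := by
  let N : Subgroup G := ⁅commutator G, (⊤ : Subgroup G)⁆
  let π := QuotientGroup.mk' N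
  have hπ : Function.Surjective π := QuotientGroup.mk'_surjective N
  have hmap := map_commutator_eq_of_surjective hπ
  have hcenter : commutator (G ⧸ N) ≤ Subgroup.center (G ⧸ N) := by
    rw [← Subgroup.commutator_top_right_eq_bot_iff_le_center, ← hmap,
      ← Subgroup.map_top_of_surjective π hπ, ← Subgroup.map_commutator, Subgroup.map_eq_bot_iff,
      QuotientGroup.ker_mk']
  have hab : Function.Surjective (Abelianization.map π) := by
    refine ((surjective_abelianization_of (G ⧸ N)).comp hπ).forall.2 fun x => ?_
    exact ⟨Abelianization.of x, Abelianization.map_of π x⟩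
  have hbot : commutator (G ⧸ N) = ⊥ := by
    refine commutator_eq_bot_of_le_center hcenter (htors.of_surjective hab) fun n hn => ?_
    refine hab.forall.2 fun x => ?_
    obtain ⟨y, rfl⟩ := hdiv n hn x
    exact ⟨Abelianization.map π y, (map_pow _ _ _).symm⟩
  refine le_antisymm (Subgroup.commutator_le_left _ _) ?_
  rwa [← hmap, Subgroup.map_eq_bot_iff, QuotientGroup.ker_mk'] at hbot

theorem commutator_eq_bot_of_isNilpotent [Group.IsNilpotent G]
    (htors : IsMulTorsion (Abelianization G))
    (hdiv : ∀ n : ℕ, n ≠ 0 → Function.Surjective fun x : Abelianization G => x ^ n) :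
    commutator G = ⊥ := by
  have hlcs (n : ℕ) : (⊤ : Subgroup G).lowerCentralSeries (n + 1) = commutator G := by
    induction n with
    | zero => exact Subgroup.top_lowerCentralSeries_one
    | succ n ih =>
      rw [Subgroup.lowerCentralSeries_succ, ih, commutator_commutator_top_eq htors hdiv]
  obtain ⟨n, hn⟩ := Subgroup.nilpotent_iff_lowerCentralSeries.1 ‹Group.IsNilpotent G›
  exact le_bot_iff.1 (hlcs n ▸ hn ▸ Subgroup.lowerCentralSeries_antitone _ n.le_succ)

theorem infinite_abelianization [Infinite G] (hG : SupIrred (⊤ : Subgroup G))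
    (hG' : commutator G ≠ ⊤) : Infinite (Abelianization G) := by
  refine not_finite_iff_infinite.1 fun h => hG' ?_
  have : Finite (G ⧸ commutator G) := h
  have := Subgroup.finiteIndex_of_finite_quotient (H := commutator G)
  exact subgroup_eq_top_of_finiteIndex hG _

theorem isAddTorsion_pruferGroup (q : ℕ) (hq : q.Prime) : IsAddTorsion (PruferGroup q hq) := by
  rintro ⟨x, k, hx⟩
  exact isOfFinAddOrder_iff_nsmul_eq_zero.2 ⟨q ^ k, pow_pos hq.pos k, Subtype.ext hx⟩

theorem exists_mulEquiv_pruferGroup_of_isNilpotent [Infinite G] [Group.IsNilpotent G]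
    (hG : SupIrred (⊤ : Subgroup G)) :
    ∃ (q : ℕ) (hq : q.Prime), Nonempty (G ≃* Multiplicative (PruferGroup q hq)) := by
  have := infinite_abelianization hG (Group.IsSolvable.commutator_lt_top_of_nontrivial G).ne
  have hab : SupIrred (⊤ : AddSubgroup (Additive (Abelianization G))) :=
    addSubgroup_supIrred_top_additive
      (subgroup_supIrred_top_of_surjective hG (surjective_abelianization_of G))
  let : DivisibleBy (Additive (Abelianization G)) ℤ := divisibleByIntOfPrime fun p hp =>
    surjective_nsmul_of_forall_finiteIndex_eq_top
      (fun H _ => addSubgroup_eq_top_of_finiteIndex hab H) hp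
  obtain ⟨q, hq, ⟨e⟩⟩ := exists_addEquiv_pruferGroup hab
  have hbot : commutator G = ⊥ := by
    refine commutator_eq_bot_of_isNilpotent (fun x => ?_) fun n hn x => ?_
    · exact isOfFinAddOrder_ofMul_iff.1
        ((isAddTorsion_pruferGroup q hq).of_surjective (f := e.symm.toAddMonoidHom)
          e.symm.surjective (Additive.ofMul x))
    · obtain ⟨y, hy⟩ := DivisibleBy.surjective_smul (Additive (Abelianization G)) ℤ
        (Int.natCast_ne_zero.2 hn) (Additive.ofMul x)
      exact ⟨y.toMul, (natCast_zsmul y n).symm.trans hy⟩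
  have hinj : Function.Injective (Abelianization.of : G →* Abelianization G) :=
    (MonoidHom.ker_eq_bot_iff _).1 ((Abelianization.ker_of G).trans hbot)
  let e' := MulEquiv.ofBijective Abelianization.of ⟨hinj, surjective_abelianization_of G⟩
  exact ⟨q, hq, ⟨e'.trans e.toMultiplicativeRight⟩⟩

end Nilpotent

section Minimax

variable {R M M₁ M₂ M₃ : Type*} [Ring R] [AddCommGroup M] [Module R M] [AddCommGroup M₁]
  [Module R M₁] [AddCommGroup M₂] [Module R M₂] [AddCommGroup M₃] [Module R M₃]

/-- `Y ≤ Z` are consecutive terms of a series of submodules as in the definition of minimax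
modules. -/
def IsMinimaxStep (Y Z : Submodule R M) : Prop :=
  Y ≤ Z ∧ (IsNoetherian R (Z ⧸ Y.comap Z.subtype) ∨ IsArtinian R (Z ⧸ Y.comap Z.subtype))

theorem isMinimax_iff_reflTransGen :
    Module.IsMinimax R M ↔ Relation.ReflTransGen IsMinimaxStep (⊥ : Submodule R M) ⊤ := by
  constructor
  · rintro ⟨n, f, hmono, h0, hlast, hfac⟩
    rw [← hlast, ← h0]
    exact Fin.induction .refl
      (fun i ih => ih.tail ⟨hmono (Fin.castSucc_le_succ i), hfac i⟩) (Fin.last n)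
  · intro h
    suffices ∀ Y : Submodule R M, Relation.ReflTransGen IsMinimaxStep ⊥ Y →
        ∃ (n : ℕ) (f : Fin (n + 1) → Submodule R M), f 0 = ⊥ ∧ f (Fin.last n) = Y ∧
          ∀ i : Fin n, IsMinimaxStep (f i.castSucc) (f i.succ) by
      obtain ⟨n, f, h0, hlast, hf⟩ := this ⊤ h
      exact ⟨n, f, Fin.monotone_iff_le_succ.2 fun i => (hf i).1, h0, hlast, fun i => (hf i).2⟩
    intro Y hY
    induction hY with
    | refl => exact ⟨0, fun _ => ⊥, rfl, rfl, fun i => i.elim0⟩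
    | @tail Y Z _ hYZ ih =>
      obtain ⟨n, f, h0, hlast, hf⟩ := ih
      refine ⟨n + 1, Fin.snoc f Z, ?_, Fin.snoc_last (α := fun _ => Submodule R M) Z f, ?_⟩
      · rw [← h0]; exact Fin.snoc_castSucc (α := fun _ => Submodule R M) Z f 0
      · refine Fin.lastCases ?_ fun i => ?_
        · simpa [hlast] using hYZ
        · simpa [Fin.succ_castSucc, -Fin.castSucc_succ] using hf i

theorem isMinimaxStep_comap (f : M₁ →ₗ[R] M₂) {Y Z : Submodule R M₂} (h : IsMinimaxStep Y Z) :
    IsMinimaxStep (Y.comap f) (Z.comap f) := by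
  let φ : (Z.comap f ⧸ (Y.comap f).comap (Z.comap f).subtype) →ₗ[R] Z ⧸ Y.comap Z.subtype :=
    Submodule.mapQ _ _ (f.restrict fun _ hx => hx) fun _ hx => hx
  have hφ : Function.Injective φ :=
    LinearMap.ker_eq_bot.1 ((Submodule.ker_mapQ _ _ _ _).trans (Submodule.mkQ_map_self _))
  exact ⟨Submodule.comap_mono h.1, h.2.imp
    (fun (_ : IsNoetherian R (Z ⧸ Y.comap Z.subtype)) => isNoetherian_of_injective φ hφ)
    fun (_ : IsArtinian R (Z ⧸ Y.comap Z.subtype)) => isArtinian_of_injective φ hφ⟩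

theorem isMinimaxStep_map (f : M₁ →ₗ[R] M₂) {Y Z : Submodule R M₁} (h : IsMinimaxStep Y Z) :
    IsMinimaxStep (Y.map f) (Z.map f) := by
  let φ : (Z ⧸ Y.comap Z.subtype) →ₗ[R] Z.map f ⧸ (Y.map f).comap (Z.map f).subtype :=
    Submodule.mapQ _ _ (f.submoduleMap Z) fun _ hx => Submodule.mem_map_of_mem hx
  have hφ : Function.Surjective φ := fun x => by
    obtain ⟨z, rfl⟩ := Submodule.mkQ_surjective _ x
    obtain ⟨y, rfl⟩ := f.submoduleMap_surjective Z z
    exact ⟨Submodule.mkQ _ y, rfl⟩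
  exact ⟨Submodule.map_mono h.1, h.2.imp
    (fun (_ : IsNoetherian R (Z ⧸ Y.comap Z.subtype)) =>
      isNoetherian_of_surjective φ (LinearMap.range_eq_top.2 hφ))
    fun (_ : IsArtinian R (Z ⧸ Y.comap Z.subtype)) => isArtinian_of_surjective _ φ hφ⟩

theorem isMinimax_of_injective (f : M₁ →ₗ[R] M₂) (hf : Function.Injective f)
    (h : Module.IsMinimax R M₂) : Module.IsMinimax R M₁ := by
  rw [isMinimax_iff_reflTransGen] at h ⊢
  simpa [Function.onFun, LinearMap.ker_eq_bot.2 hf] using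
    h.lift (Submodule.comap f) fun _ _ => isMinimaxStep_comap f

theorem isMinimax_of_exact (f : M₁ →ₗ[R] M₂) (g : M₂ →ₗ[R] M₃) (hfg : Function.Exact f g)
    (h₁ : Module.IsMinimax R M₁) (h₃ : Module.IsMinimax R M₃) : Module.IsMinimax R M₂ := by
  rw [isMinimax_iff_reflTransGen] at h₁ h₃ ⊢
  have hmap := h₁.lift (Submodule.map f) fun _ _ => isMinimaxStep_map f
  have hcomap := h₃.lift (Submodule.comap g) fun _ _ => isMinimaxStep_comap g
  simp only [Function.onFun, Submodule.map_bot, Submodule.map_top, Submodule.comap_bot,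
    Submodule.comap_top, hfg.linearMap_ker_eq] at hmap hcomap
  exact hmap.trans hcomap

theorem isMinimax_prod (h₁ : Module.IsMinimax R M₁) (h₂ : Module.IsMinimax R M₂) :
    Module.IsMinimax R (M₁ × M₂) :=
  isMinimax_of_exact (LinearMap.inl R M₁ M₂) (LinearMap.snd R M₁ M₂) .inl_snd h₁ h₂

theorem isMinimax_quotient_inf {C D : Submodule R M} (hC : Module.IsMinimax R (M ⧸ C))
    (hD : Module.IsMinimax R (M ⧸ D)) : Module.IsMinimax R (M ⧸ (C ⊓ D)) := by
  have hker : LinearMap.ker (C.mkQ.prod D.mkQ) = C ⊓ D := by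
    rw [LinearMap.ker_prod, Submodule.ker_mkQ, Submodule.ker_mkQ]
  exact isMinimax_of_injective ((C ⊓ D).liftQ _ hker.ge)
    (LinearMap.ker_eq_bot.1 (Submodule.ker_liftQ_eq_bot _ _ _ hker.le)) (isMinimax_prod hC hD)

end Minimax

section MinimaxInduction

universe u

theorem isMinimax_induction {R : Type*} [Ring R]
    {P : ∀ (M : Type u) [AddCommGroup M] [Module R M], Prop}
    (of_noetherian_or_artinian : ∀ (M : Type u) [AddCommGroup M] [Module R M],
      IsNoetherian R M ∨ IsArtinian R M → P M)
    (of_exact : ∀ {M₁ M₂ M₃ : Type u} [AddCommGroup M₁] [Module R M₁] [AddCommGroup M₂]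
      [Module R M₂] [AddCommGroup M₃] [Module R M₃] {f : M₁ →ₗ[R] M₂} {g : M₂ →ₗ[R] M₃},
      Function.Injective f → Function.Exact f g → Function.Surjective g → P M₁ → P M₃ → P M₂)
    {M : Type u} [AddCommGroup M] [Module R M] (hM : Module.IsMinimax R M) : P M := by
  have hP (Y : Submodule R M) (hY : Relation.ReflTransGen IsMinimaxStep ⊥ Y) : P Y := by
    induction hY with
    | refl => exact of_noetherian_or_artinian _ (.inl inferInstance)
    | @tail Y Z _ hYZ ih =>
      refine of_exact (Submodule.inclusion_injective hYZ.1) (LinearMap.exact_iff.2 ?_)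
        (Submodule.mkQ_surjective (Y.comap Z.subtype)) ih (of_noetherian_or_artinian _ hYZ.2)
      rw [Submodule.ker_mkQ, Submodule.range_inclusion]
  refine of_exact (⊤ : Submodule R M).subtype_injective (LinearMap.exact_iff.2 ?_)
    (Submodule.mkQ_surjective ⊤) (hP ⊤ (isMinimax_iff_reflTransGen.1 hM))
    (of_noetherian_or_artinian _ (.inl inferInstance))
  rw [Submodule.ker_mkQ, Submodule.range_subtype]

end MinimaxInduction

section FiniteQuotients

theorem finite_of_exact {R A B C : Type*} [Ring R] [AddCommGroup A] [Module R A]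
    [AddCommGroup B] [Module R B] [AddCommGroup C] [Module R C] [Finite A] [Finite C]
    {f : A →ₗ[R] B} {g : B →ₗ[R] C} (hfg : Function.Exact f g) : Finite B := by
  have : Finite (LinearMap.ker g) := hfg.linearMap_ker_eq ▸ Set.finite_range f
  have : Finite (B ⧸ (LinearMap.ker g).toAddSubgroup) :=
    .of_equiv _ g.quotKerEquivRange.symm.toEquiv
  exact .of_addSubgroup_quotient (LinearMap.ker g).toAddSubgroup

theorem finite_of_isTorsionBy {R M : Type*} [CommRing R] {r : R} [Finite (R ⧸ Ideal.span {r})]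
    [AddCommGroup M] [Module R M] (hr : Module.IsTorsionBy R M r)
    (hM : IsNoetherian R M ∨ IsArtinian R M) : Finite M := by
  have hr' := (Module.isTorsionBySet_span_singleton_iff r).2 hr
  let : Module (R ⧸ Ideal.span {r}) M := hr'.module
  have : IsScalarTower R (R ⧸ Ideal.span {r}) M := hr'.isScalarTower
  have : IsNoetherian (R ⧸ Ideal.span {r}) M := by
    rcases hM with hM | hM
    · exact isNoetherian_of_tower R hM
    · exact IsSemiprimaryRing.isNoetherian_iff_isArtinian.2 (isArtinian_of_tower R hM)
  exact Module.finite_of_finite (R ⧸ Ideal.span {r})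

theorem finite_torsionBy_of_isMinimax {R M : Type*} [CommRing R] {r : R}
    [Finite (R ⧸ Ideal.span {r})] [AddCommGroup M] [Module R M] (hM : Module.IsMinimax R M) :
    Finite (Submodule.torsionBy R M r) := by
  refine isMinimax_induction (R := R)
    (P := fun M _ _ => Finite (Submodule.torsionBy R M r)) ?_ ?_ hM
  · intro M _ _ hM
    exact finite_of_isTorsionBy (Submodule.torsionBy_isTorsionBy r) (hM.imp
      (fun (_ : IsNoetherian R M) => inferInstance) fun (_ : IsArtinian R M) => inferInstance)
  · intro M₁ M₂ M₃ _ _ _ _ _ _ f g hf hfg _ _ _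
    let f' : Submodule.torsionBy R M₁ r →ₗ[R] Submodule.torsionBy R M₂ r :=
      f.restrict fun x hx => by
        rw [Submodule.mem_torsionBy_iff] at hx ⊢
        rw [← map_smul, hx, map_zero]
    let g' : Submodule.torsionBy R M₂ r →ₗ[R] Submodule.torsionBy R M₃ r :=
      g.restrict fun x hx => by
        rw [Submodule.mem_torsionBy_iff] at hx ⊢
        rw [← map_smul, hx, map_zero]
    have hfg' : Function.Exact f' g' := fun x => by
      rw [Subtype.ext_iff]
      refine (hfg x).trans ⟨?_, ?_⟩
      · rintro ⟨y, hy⟩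
        have hry : r • y = 0 :=
          hf (by rw [map_smul, hy, (Submodule.mem_torsionBy_iff r _).1 x.2, map_zero])
        exact ⟨⟨y, hry⟩, Subtype.ext hy⟩
      · rintro ⟨y, rfl⟩
        exact ⟨y, rfl⟩
    exact finite_of_exact hfg'

theorem finite_quotSMulTop_of_isMinimax {R M : Type*} [CommRing R] {r : R}
    [Finite (R ⧸ Ideal.span {r})] [AddCommGroup M] [Module R M] (hM : Module.IsMinimax R M) :
    Finite (QuotSMulTop r M) := by
  refine isMinimax_induction (R := R) (P := fun M _ _ => Finite (QuotSMulTop r M)) ?_ ?_ hM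
  · intro M _ _ hM
    exact finite_of_isTorsionBy (Module.isTorsionBy_quotient_element_smul M r) (hM.imp
      (fun (_ : IsNoetherian R M) => inferInstance) fun (_ : IsArtinian R M) => inferInstance)
  · intro M₁ M₂ M₃ _ _ _ _ _ _ f g _ hfg hg _ _
    exact finite_of_exact (QuotSMulTop.map_exact r hfg hg)

end FiniteQuotients

section HausdorffModTorsion

open Filter

/-- Multiplication by `r` is injective on `M`, and every element of `M` divisible by all powers of
`r` is torsion. Unlike the `r`-adic Hausdorff property, this also holds in Artinian modules, for
almost all primes `r`. -/
structure IsHausdorffModTorsion {R : Type*} [CommRing R] (r : R) (M : Type*) [AddCommGroup M]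
    [Module R M] : Prop where
  isSMulRegular : IsSMulRegular M r
  mem_torsion : ∀ x : M, (∀ k : ℕ, ∃ y, r ^ k • y = x) → x ∈ Submodule.torsion R M

theorem isHausdorffModTorsion_of_exact {R M₁ M₂ M₃ : Type*} [CommRing R] [AddCommGroup M₁]
    [Module R M₁] [AddCommGroup M₂] [Module R M₂] [AddCommGroup M₃] [Module R M₃] {r : R}
    {f : M₁ →ₗ[R] M₂} {g : M₂ →ₗ[R] M₃} (hf : Function.Injective f) (hfg : Function.Exact f g)
    (h₁ : IsHausdorffModTorsion r M₁) (h₃ : IsHausdorffModTorsion r M₃) :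
    IsHausdorffModTorsion r M₂ where
  isSMulRegular := isSMulRegular_of_range_eq_ker hf hfg.linearMap_ker_eq.symm h₁.1 h₃.1
  mem_torsion x hx := by
    obtain ⟨a, ha⟩ := (Submodule.mem_torsion_iff _).1 <| h₃.mem_torsion (g x) fun k => by
      obtain ⟨y, rfl⟩ := hx k
      exact ⟨g y, (map_smul g _ y).symm⟩
    obtain ⟨w, hw⟩ := (hfg (a • x)).1 (by rw [← ha, Submonoid.smul_def, map_smul]; rfl)
    obtain ⟨b, hb⟩ := (Submodule.mem_torsion_iff _).1 <| h₁.mem_torsion w fun k => by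
      obtain ⟨y, rfl⟩ := hx k
      have hgy : g (a • y) = 0 := (h₃.isSMulRegular.pow k).right_eq_zero_of_smul <| by
        rw [← map_smul, smul_comm, ← hw, hfg.apply_apply_eq_zero]
      obtain ⟨v, hv⟩ := (hfg _).1 hgy
      exact ⟨v, hf (by rw [map_smul, hv, hw, smul_comm])⟩
    refine (Submodule.mem_torsion_iff x).2 ⟨b * a, ?_⟩
    rw [mul_smul, ← hw, Submonoid.smul_def, ← map_smul, ← Submonoid.smul_def, hb, map_zero]

theorem eventually_isSMulRegular {R M ι : Type*} [CommRing R] [AddCommGroup M] [Module R M]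
    (hM : IsNoetherian R M ∨ IsArtinian R M) {r : ι → R}
    (hr : Pairwise (Function.onFun IsCoprime r)) :
    ∀ᶠ i in cofinite, IsSMulRegular M (r i) := by
  simp only [isSMulRegular_iff_torsionBy_eq_bot]
  have hind : iSupIndep fun i => Submodule.torsionBy R M (r i) :=
    iSupIndep_iff_supIndep.2 fun _ => Submodule.supIndep_torsionBy (hr.set_pairwise _)
  exact hM.elim (fun _ : IsNoetherian R M => WellFoundedGT.finite_ne_bot_of_iSupIndep hind)
    fun _ : IsArtinian R M => WellFoundedLT.finite_ne_bot_of_iSupIndep hind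

theorem mem_torsion_of_isNoetherian {R M : Type*} [CommRing R] [IsDomain R] [IsNoetherianRing R]
    [AddCommGroup M] [Module R M] [Module.Finite R M] {r : R} (hr : ¬ IsUnit r) {x : M}
    (hx : ∀ k : ℕ, ∃ y, r ^ k • y = x) : x ∈ Submodule.torsion R M := by
  have hx' : x ∈ (⨅ k, Ideal.span {r} ^ k • ⊤ : Submodule R M) := by
    refine (Submodule.mem_iInf _).2 fun k => ?_
    obtain ⟨y, rfl⟩ := hx k
    exact Submodule.smul_mem_smul (Ideal.pow_mem_pow (Ideal.mem_span_singleton_self r) k) trivial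
  obtain ⟨⟨s, hs⟩, hsx⟩ := (Ideal.mem_iInf_smul_pow_eq_bot_iff _ x).1 hx'
  have hs1 : s - 1 ≠ 0 := by
    rintro h
    rw [sub_eq_zero.1 h, Ideal.mem_span_singleton] at hs
    exact hr (isUnit_of_dvd_one hs)
  refine (Submodule.mem_torsion_iff x).2 ⟨⟨s - 1, mem_nonZeroDivisors_of_ne_zero hs1⟩, ?_⟩
  change (s - 1) • x = 0
  rw [sub_smul, one_smul, sub_eq_zero]
  exact hsx

theorem mem_torsion_of_isArtinian {R M : Type*} [CommRing R] [IsDomain R] (hR : ¬ IsField R)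
    [AddCommGroup M] [Module R M] [IsArtinian R M] (x : M) : x ∈ Submodule.torsion R M := by
  by_contra hx
  have hinj : Function.Injective (LinearMap.toSpanSingleton R M x) :=
    (injective_iff_map_eq_zero _).2 fun s hs => by
      by_contra hs0
      exact hx ((Submodule.mem_torsion_iff x).2 ⟨⟨s, mem_nonZeroDivisors_of_ne_zero hs0⟩, hs⟩)
  have : IsArtinianRing R := isArtinian_of_injective _ hinj
  exact hR (IsArtinianRing.isField_of_isDomain R)

theorem eventually_isHausdorffModTorsion {R M ι : Type*} [CommRing R] [IsDomain R]
    [IsNoetherianRing R] [AddCommGroup M] [Module R M] (hR : ¬ IsField R) {r : ι → R}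
    (hr : Pairwise (Function.onFun IsCoprime r)) (hunit : ∀ i, ¬ IsUnit (r i))
    (hM : Module.IsMinimax R M) : ∀ᶠ i in cofinite, IsHausdorffModTorsion (r i) M := by
  refine isMinimax_induction (R := R)
    (P := fun M _ _ => ∀ᶠ i in cofinite, IsHausdorffModTorsion (r i) M) ?_ ?_ hM
  · intro M _ _ hM
    filter_upwards [eventually_isSMulRegular hM hr] with i hi
    refine ⟨hi, fun x hx => ?_⟩
    rcases hM with hM | hM
    · exact mem_torsion_of_isNoetherian (hunit i) hx
    · exact mem_torsion_of_isArtinian hR x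
  · intro M₁ M₂ M₃ _ _ _ _ _ _ f g hf hfg _ h₁ h₃
    filter_upwards [h₁, h₃] with i hi₁ hi₃
    exact isHausdorffModTorsion_of_exact hf hfg hi₁ hi₃

end HausdorffModTorsion

section NoFiniteIndex

open scoped Pointwise

variable {G : Type*} [Group G]

theorem monoidHom_apply_eq_one_of_finite {N : Type*} [Monoid N] [Finite N]
    (hG : ∀ H : Subgroup G, H.FiniteIndex → H = ⊤) (f : G →* N) (g : G) : f g = 1 := by
  have hg : g ∈ f.toHomUnits.ker :=
    hG _ (Subgroup.finiteIndex_ker f.toHomUnits) ▸ Subgroup.mem_top g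
  exact congrArg Units.val (MonoidHom.mem_ker.1 hg)

variable {R M : Type*} [CommRing R] [AddCommGroup M] [Module R M]

theorem representation_apply_eq_of_finite [Finite M]
    (hG : ∀ H : Subgroup G, H.FiniteIndex → H = ⊤) (ρ : Representation R G M) (g : G) (x : M) :
    ρ g x = x := by
  have : Finite (Module.End R M) := DFunLike.finite _
  rw [monoidHom_apply_eq_one_of_finite hG ρ g, Module.End.one_apply]

theorem representation_apply_eq_of_mem_torsion [Nontrivial R] [Ring.HasFiniteQuotients R]
    (hG : ∀ H : Subgroup G, H.FiniteIndex → H = ⊤) (ρ : Representation R G M)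
    (hM : Module.IsMinimax R M) {x : M} (hx : x ∈ Submodule.torsion R M) (g : G) :
    ρ g x = x := by
  obtain ⟨⟨r, hr⟩, hrx⟩ := (Submodule.mem_torsion_iff x).1 hx
  have : Finite (R ⧸ Ideal.span {r}) :=
    Ring.HasFiniteQuotients.finiteQuotient (by simpa using nonZeroDivisors.ne_zero hr)
  have : Finite (Submodule.torsionBy R M r) := finite_torsionBy_of_isMinimax hM
  let ρ' := ρ.subrepresentation (Submodule.torsionBy R M r) fun g y hy => by
    rw [Submodule.mem_comap, Submodule.mem_torsionBy_iff, ← map_smul,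
      (Submodule.mem_torsionBy_iff r y).1 hy, map_zero]
  exact congrArg Subtype.val (representation_apply_eq_of_finite hG ρ' g ⟨x, hrx⟩)

theorem representation_exists_smul_eq_apply_sub [Ring.HasFiniteQuotients R]
    (hG : ∀ H : Subgroup G, H.FiniteIndex → H = ⊤) (ρ : Representation R G M)
    (hM : Module.IsMinimax R M) {r : R} (hr : r ≠ 0) (g : G) (x : M) :
    ∃ y, r • y = ρ g x - x := by
  have : Finite (R ⧸ Ideal.span {r}) := Ring.HasFiniteQuotients.finiteQuotient (by simpa using hr)
  have : Finite (QuotSMulTop r M) := finite_quotSMulTop_of_isMinimax hM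
  let ρ' := ρ.quotient (r • ⊤) fun g => by
    rintro _ ⟨y, -, rfl⟩
    exact ⟨ρ g y, trivial, (map_smul (ρ g) r y).symm⟩
  have hρ' : ρ' g (Submodule.Quotient.mk x) = Submodule.Quotient.mk x :=
    representation_apply_eq_of_finite hG ρ' g _
  obtain ⟨y, -, hy⟩ := (Submodule.Quotient.eq _).1 hρ'
  exact ⟨y, hy⟩

theorem representation_apply_sub_mem_torsion [IsDomain R] [Ring.HasFiniteQuotients R]
    (hG : ∀ H : Subgroup G, H.FiniteIndex → H = ⊤) (ρ : Representation R G M)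
    (hM : Module.IsMinimax R M) {r : R} (hr : r ≠ 0) (hrM : IsHausdorffModTorsion r M)
    (g : G) (x : M) : ρ g x - x ∈ Submodule.torsion R M :=
  hrM.mem_torsion _ fun k =>
    representation_exists_smul_eq_apply_sub hG ρ hM (pow_ne_zero k hr) g x

theorem exists_isHausdorffModTorsion {M : Type*} [AddCommGroup M] [Module ℤ M]
    (hM : Module.IsMinimax ℤ M) : ∃ p : ℤ, p ≠ 0 ∧ IsHausdorffModTorsion p M := by
  have hcoprime : Pairwise (Function.onFun IsCoprime fun p : Nat.Primes => (p : ℤ)) :=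
    fun p q hpq => Nat.isCoprime_iff_coprime.2 <|
      (Nat.coprime_primes p.2 q.2).2 fun h => hpq (Subtype.ext h)
  have hunit (p : Nat.Primes) : ¬ IsUnit (p : ℤ) := (Nat.prime_iff_prime_int.1 p.2).not_isUnit
  obtain ⟨p, hp⟩ := (eventually_isHausdorffModTorsion Int.not_isField hcoprime hunit hM).exists
  exact ⟨p, mod_cast p.2.ne_zero, hp⟩

theorem representation_int_apply_apply_sub {M : Type*} [AddCommGroup M] [Module ℤ M]
    (hG : ∀ H : Subgroup G, H.FiniteIndex → H = ⊤) (ρ : Representation ℤ G M)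
    (hM : Module.IsMinimax ℤ M) (g h : G) (x : M) : ρ h (ρ g x - x) = ρ g x - x := by
  obtain ⟨p, hp, hpM⟩ := exists_isHausdorffModTorsion hM
  exact representation_apply_eq_of_mem_torsion hG ρ hM
    (representation_apply_sub_mem_torsion hG ρ hM hp hpM g x) h

theorem representation_apply_eq_of_mem_commutator {ρ : Representation R G M}
    (hρ : ∀ g h x, ρ h (ρ g x - x) = ρ g x - x) {k : G} (hk : k ∈ commutator G) (x : M) :
    ρ k x = x := by
  have hmul (g h : G) : ρ (g * h) = ρ g + ρ h - 1 := by
    ext x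
    have := hρ h g x
    simp only [map_mul, Module.End.mul_apply, map_sub, LinearMap.sub_apply, LinearMap.add_apply,
      Module.End.one_apply] at this ⊢
    rw [sub_eq_iff_eq_add.1 this]; abel
  have hker : commutator G ≤ MonoidHom.ker ρ := by
    refine Subgroup.commutator_le.2 fun g _ h _ => ?_
    have hcomm : ρ (g⁻¹ * h⁻¹) = ρ (h⁻¹ * g⁻¹) := by rw [hmul, hmul, add_comm]
    simpa [commutatorElement_def, mul_assoc] using (MonoidHom.eq_iff ρ).1 hcomm
  rw [MonoidHom.mem_ker.1 (hker hk), Module.End.one_apply]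

end NoFiniteIndex

section Centralizer

variable {R G A : Type*} [Ring R] [Group G] [AddCommGroup A] [Module R A] [DistribMulAction G A]
  [SMulCommClass G R A]

theorem smul_mem_moduleCentralizer (H : Subgroup G) [H.Normal] (g : G) {a : A}
    (ha : a ∈ moduleCentralizer R A H) : g • a ∈ moduleCentralizer R A H := fun h hh => by
  rw [← inv_smul_eq_iff, ← mul_smul, ← mul_smul]
  exact ha _ (by simpa using ‹H.Normal›.conj_mem h hh g⁻¹)

variable (R A) in
/-- The representation of `G` on `A / C_A(H)` for a normal subgroup `H`. -/
def quotientCentralizerRep (H : Subgroup G) [H.Normal] :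
    Representation R G (A ⧸ moduleCentralizer R A H) :=
  (Representation.ofDistribMulAction R G A).quotient _ fun g _ ha =>
    smul_mem_moduleCentralizer H g ha

theorem quotientCentralizerRep_apply_mk (H : Subgroup G) [H.Normal] (g : G) (a : A) :
    quotientCentralizerRep R A H g (Submodule.Quotient.mk a) = Submodule.Quotient.mk (g • a) :=
  rfl

theorem moduleCentralizer_sup (H K : Subgroup G) :
    moduleCentralizer R A (H ⊔ K) = moduleCentralizer R A H ⊓ moduleCentralizer R A K := by
  ext a
  exact sup_le_iff (a := H) (b := K) (c := MulAction.stabilizer G a)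

theorem supIrred_top_of_isMinimax_quotient [Nontrivial G]
    (hG : ¬ Module.IsMinimax R (A ⧸ moduleCentralizer R A (⊤ : Subgroup G)))
    (hH : ∀ H : Subgroup G, H ≠ ⊤ → Module.IsMinimax R (A ⧸ moduleCentralizer R A H)) :
    SupIrred (⊤ : Subgroup G) := by
  refine ⟨by simp, fun {H K} hHK => ?_⟩
  by_contra! hne
  rw [← hHK, moduleCentralizer_sup] at hG
  exact hG (isMinimax_quotient_inf (hH H hne.1) (hH K hne.2))

end Centralizer

section Unipotent

open scoped commutatorElement

variable {G A : Type*} [Group G] [AddCommGroup A] [DistribMulAction G A]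

theorem smul_smul_sub_mem_moduleCentralizer (hG : ∀ H : Subgroup G, H.FiniteIndex → H = ⊤)
    (H : Subgroup G) [H.Normal] (hH : Module.IsMinimax ℤ (A ⧸ moduleCentralizer ℤ A H))
    (g h : G) (a : A) : h • (g • a - a) - (g • a - a) ∈ moduleCentralizer ℤ A H := by
  have hfix := representation_int_apply_apply_sub hG (quotientCentralizerRep ℤ A H) hH g h
    (Submodule.Quotient.mk a)
  simpa only [quotientCentralizerRep_apply_mk, ← Submodule.Quotient.mk_sub, Submodule.Quotient.eq]
    using hfix

theorem smul_sub_mem_moduleCentralizer_of_mem_commutator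
    (hG : ∀ H : Subgroup G, H.FiniteIndex → H = ⊤)
    (H : Subgroup G) [H.Normal] (hH : Module.IsMinimax ℤ (A ⧸ moduleCentralizer ℤ A H))
    {k : G} (hk : k ∈ commutator G) (a : A) : k • a - a ∈ moduleCentralizer ℤ A H := by
  have hfix := representation_apply_eq_of_mem_commutator
    (representation_int_apply_apply_sub hG (quotientCentralizerRep ℤ A H) hH) hk
    (Submodule.Quotient.mk a)
  simpa only [quotientCentralizerRep_apply_mk, Submodule.Quotient.eq] using hfix

theorem commutatorElement_smul_sub {k : G} (hk : ∀ (g : G) (a : A), g • (k • a - a) = k • a - a)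
    (g : G) (a : A) : ⁅k, g⁆ • a - a = k • (a - g⁻¹ • a) - (a - g⁻¹ • a) := by
  have hinv (b : A) : k⁻¹ • b = b - (k • b - b) := by
    rw [inv_smul_eq_iff, smul_sub, hk]; abel
  rw [commutatorElement_def, mul_smul, mul_smul, mul_smul, hinv, smul_sub g, hk, smul_inv_smul,
    smul_sub k, hk, smul_sub k]
  abel

theorem commutatorElement_commutatorElement_eq_one [FaithfulSMul G A] {K : Subgroup G} [K.Normal]
    (hK : ∀ k ∈ K, ∀ (g : G) (a : A), g • (k • a - a) = k • a - a)
    (hGK : ∀ k ∈ K, ∀ (g h : G) (a : A),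
      k • (h • (g • a - a) - (g • a - a)) = h • (g • a - a) - (g • a - a))
    {k : G} (hk : k ∈ K) (g h : G) : ⁅⁅k, g⁆, h⁆ = 1 := by
  have hkg : ⁅k, g⁆ ∈ K :=
    Subgroup.commutator_le_left K ⊤ (Subgroup.commutator_mem_commutator hk trivial)
  refine FaithfulSMul.eq_of_smul_eq_smul (α := A) fun a => ?_
  have hdiff : (a - h⁻¹ • a) - g⁻¹ • (a - h⁻¹ • a) = g⁻¹ • (h⁻¹ • a - a) - (h⁻¹ • a - a) := by
    simp only [smul_sub]; abel
  rw [one_smul, ← sub_eq_zero, commutatorElement_smul_sub (hK _ hkg),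
    commutatorElement_smul_sub (hK k hk), hdiff, hGK k hk, sub_self]

theorem isNilpotent_of_commutatorElement_eq_one
    (hG : ∀ k ∈ commutator G, ∀ g h : G, ⁅⁅k, g⁆, h⁆ = 1) : Group.IsNilpotent G := by
  refine Subgroup.nilpotent_iff_lowerCentralSeries.2
    ⟨3, Subgroup.lowerCentralSeries_succ_eq_bot ⊤ ?_⟩
  refine Subgroup.commutator_le.2 fun k hk g _ => Subgroup.mem_center_iff.2 fun h => ?_
  exact (commutatorElement_eq_one_iff_mul_comm.1 (hG k hk g h)).symm

end Unipotent

theorem isNilpotent_of_isMinimax_quotient {G A : Type*} [Group G] [Infinite G] [AddCommGroup A]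
    [DistribMulAction G A] [FaithfulSMul G A] (hG : SupIrred (⊤ : Subgroup G))
    (hG' : commutator G ≠ ⊤)
    (hH : ∀ H : Subgroup G, H ≠ ⊤ → Module.IsMinimax ℤ (A ⧸ moduleCentralizer ℤ A H)) :
    Group.IsNilpotent G := by
  have hfi : ∀ H : Subgroup G, H.FiniteIndex → H = ⊤ := fun H _ =>
    subgroup_eq_top_of_finiteIndex hG H
  refine isNilpotent_of_commutatorElement_eq_one fun k hk g h =>
    commutatorElement_commutatorElement_eq_one (A := A) (fun k hk g a => ?_)
      (fun k hk g h a => ?_) hk g h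
  · have hne : Subgroup.zpowers g ⊔ commutator G ≠ ⊤ := fun h =>
      (hG.2 h).elim (zpowers_ne_top_of_supIrred_top hG g) hG'
    have : (Subgroup.zpowers g ⊔ commutator G).Normal := .of_commutator_le _ le_sup_right
    exact smul_sub_mem_moduleCentralizer_of_mem_commutator hfi _ (hH _ hne) hk a g
      (Subgroup.mem_sup_left (Subgroup.mem_zpowers g))
  · exact smul_smul_sub_mem_moduleCentralizer hfi _ (hH _ hG') g h a k hk

theorem minimax_int_proper_subgroups_prufer_general (G : Type*) [Group G] [Infinite G]
    (A : Type*) [AddCommGroup A] [DistribMulAction G A]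
    (hG' : commutator G ≠ ⊤)
    (hfaith : ∀ g : G, (∀ a : A, g • a = a) → g = 1)
    (hG : ¬ Module.IsMinimax ℤ (A ⧸ moduleCentralizer ℤ A (⊤ : Subgroup G)))
    (hH : ∀ H : Subgroup G, H ≠ ⊤ → Module.IsMinimax ℤ (A ⧸ moduleCentralizer ℤ A H)) :
    ∃ (q : ℕ) (hq : q.Prime), Nonempty (G ≃* Multiplicative (PruferGroup q hq)) := by
  have : FaithfulSMul G A := ⟨fun {g h} hgh => inv_mul_eq_one.1 <| hfaith _ fun a => by
    rw [mul_smul, ← hgh, inv_smul_smul]⟩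
  have hirred : SupIrred (⊤ : Subgroup G) := supIrred_top_of_isMinimax_quotient hG hH
  have : Group.IsNilpotent G := isNilpotent_of_isMinimax_quotient hirred hG' hH
  exact exists_mulEquiv_pruferGroup_of_isNilpotent hirred

/-- Theorem 2.2: let `A` be a `ℤG`-module where `G` is an infinite locally soluble group
with `G ≠ G'` acting faithfully (`C_G(A) = 1`). If `A/C_A(G)` is not a minimax `ℤ`-module
and `A/C_A(H)` is a minimax `ℤ`-module for every proper subgroup `H` of `G`, then `G` is
isomorphic to a quasi-cyclic `q`-group for some prime `q`. -/
theorem minimax_int_proper_subgroups_prufer (G : Type*) [Group G] [Infinite G]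
    (A : Type*) [AddCommGroup A] [DistribMulAction G A]
    (hsol : ∀ H : Subgroup G, H.FG → IsSolvable H)
    (hG' : commutator G ≠ ⊤)
    (hfaith : ∀ g : G, (∀ a : A, g • a = a) → g = 1)
    (hG : ¬ Module.IsMinimax ℤ (A ⧸ moduleCentralizer ℤ A (⊤ : Subgroup G)))
    (hH : ∀ H : Subgroup G, H ≠ ⊤ → Module.IsMinimax ℤ (A ⧸ moduleCentralizer ℤ A H)) :
    ∃ (q : ℕ) (hq : q.Prime), Nonempty (G ≃* Multiplicative (PruferGroup q hq)) :=
  minimax_int_proper_subgroups_prufer_general G A hG' hfaith hG hH
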